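/- arXiv:0706.0615 — 10 statements merged into one kernel-verified Lean document; each statement's English description precedes it below -/
import Mathlib

section
/- Let U : ℝ⁴ → ℝ be defined by U(x) = −4·log(1 + ‖x‖²/(8√6)). Then U is smooth on ℝ⁴ and satisfies the fourth-order Liouville equation Δ(ΔU)(x) = exp(U(x)) for every x ∈ ℝ⁴. -/
noncomputable section

/-- The Laplacian of `f : ℝ⁴ → ℝ` at `x`: the trace of the second derivative. -/
def lap (f : EuclideanSpace ℝ (Fin 4) → ℝ) (x : EuclideanSpace ℝ (Fin 4)) : ℝ :=
  ∑ i : Fin 4,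
    fderiv ℝ (fun y => fderiv ℝ f y (EuclideanSpace.single i (1:ℝ))) x
      (EuclideanSpace.single i (1:ℝ))

theorem lap_radial (g ga gb : ℝ → ℝ)
    (h1 : ∀ s, 0 ≤ s → HasDerivAt g (ga s) s) (h2 : ∀ s, 0 ≤ s → HasDerivAt ga (gb s) s)
    (x : EuclideanSpace ℝ (Fin 4)) :
    lap (fun y => g (‖y‖ ^ 2)) x = 4 * ‖x‖ ^ 2 * gb (‖x‖ ^ 2) + 8 * ga (‖x‖ ^ 2) := by
  have hn : ∀ y : EuclideanSpace ℝ (Fin 4),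
      HasFDerivAt (fun z : EuclideanSpace ℝ (Fin 4) => ‖z‖ ^ 2) (2 • innerSL ℝ y) y :=
    fun y => (hasStrictFDerivAt_norm_sq y).hasFDerivAt
  have e1 : ∀ (i : Fin 4) (y : EuclideanSpace ℝ (Fin 4)),
      fderiv ℝ (fun z : EuclideanSpace ℝ (Fin 4) => g (‖z‖ ^ 2)) y
        (EuclideanSpace.single i (1:ℝ)) = ga (‖y‖ ^ 2) * (2 * y i) := by
    intro i y
    have h := (h1 (‖y‖ ^ 2) (by positivity)).comp_hasFDerivAt y (hn y)
    have hd : fderiv ℝ (fun z : EuclideanSpace ℝ (Fin 4) => g (‖z‖ ^ 2)) y = _ := h.fderiv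
    rw [hd]
    simp [EuclideanSpace.inner_single_right]
  have e2 : ∀ i : Fin 4,
      fderiv ℝ (fun y : EuclideanSpace ℝ (Fin 4) => ga (‖y‖ ^ 2) * (2 * y i)) x
        (EuclideanSpace.single i (1:ℝ))
        = 4 * (x i) ^ 2 * gb (‖x‖ ^ 2) + 2 * ga (‖x‖ ^ 2) := by
    intro i
    have h : HasFDerivAt (fun y : EuclideanSpace ℝ (Fin 4) => ga (‖y‖ ^ 2)) _ x :=
      (h2 (‖x‖ ^ 2) (by positivity)).comp_hasFDerivAt x (hn x)
    have hp : HasFDerivAt (fun y : EuclideanSpace ℝ (Fin 4) => 2 * y i)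
        ((2:ℝ) • (EuclideanSpace.proj i : EuclideanSpace ℝ (Fin 4) →L[ℝ] ℝ)) x :=
      (EuclideanSpace.proj i : EuclideanSpace ℝ (Fin 4) →L[ℝ] ℝ).hasFDerivAt.const_mul 2
    rw [(h.fun_mul hp).fderiv]
    simp [EuclideanSpace.inner_single_right]
    ring
  unfold lap
  simp_rw [e1, e2]
  have hs : ‖x‖ ^ 2 = ∑ i, (x i) ^ 2 := by
    rw [EuclideanSpace.norm_sq_eq]; simp
  generalize gb (‖x‖ ^ 2) = a
  generalize ga (‖x‖ ^ 2) = b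
  rw [hs]
  simp only [Fin.sum_univ_four]
  ring

/-- The standard bubble `U(x) = −4 log(1 + ‖x‖²/(8√6))` is smooth on `ℝ⁴` and solves the
fourth-order Liouville equation `Δ²U = e^U`. -/
theorem bubble_smooth_and_solves :
    ContDiff ℝ (⊤ : ℕ∞)
      (fun x : EuclideanSpace ℝ (Fin 4) =>
        -4 * Real.log (1 + ‖x‖ ^ 2 / (8 * Real.sqrt 6))) ∧
    ∀ x : EuclideanSpace ℝ (Fin 4),
      lap (lap (fun x : EuclideanSpace ℝ (Fin 4) =>
          -4 * Real.log (1 + ‖x‖ ^ 2 / (8 * Real.sqrt 6)))) x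
        = Real.exp (-4 * Real.log (1 + ‖x‖ ^ 2 / (8 * Real.sqrt 6))) := by
  have hc : 0 < 8 * Real.sqrt 6 := by positivity
  have hc2 : (8 * Real.sqrt 6) ^ 2 = 384 := by
    rw [mul_pow, Real.sq_sqrt (by norm_num)]; norm_num
  generalize 8 * Real.sqrt 6 = c at hc hc2
  refine ⟨?_, ?_⟩
  · refine contDiff_const.mul (ContDiff.log ?_ ?_)
    · exact contDiff_const.add ((contDiff_norm_sq ℝ).div_const c)
    · intro x; positivity
  have L1 : lap (fun x : EuclideanSpace ℝ (Fin 4) => -4 * Real.log (1 + ‖x‖ ^ 2 / c))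
      = fun x => -16 * (c + ‖x‖ ^ 2)⁻¹ - 16 * c * ((c + ‖x‖ ^ 2)⁻¹) ^ 2 := by
    funext x
    rw [lap_radial (fun s => -4 * Real.log (1 + s / c)) (fun s => -4 * (c + s)⁻¹)
      (fun s => 4 * ((c + s)⁻¹) ^ 2)]
    · have : c + ‖x‖ ^ 2 ≠ 0 := by positivity
      field_simp
      ring
    · intro s hs
      have h0 : 1 + s / c ≠ 0 := by positivity
      have h00 : c + s ≠ 0 := by positivity
      refine HasDerivAt.congr_deriv (((((hasDerivAt_id' s).div_const c).const_add 1).log h0).const_mul (-4)) ?_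
      field_simp
    · intro s hs
      have h00 : c + s ≠ 0 := by positivity
      refine HasDerivAt.congr_deriv ((((hasDerivAt_id' s).const_add c).fun_inv h00).const_mul (-4)) ?_
      field_simp
  intro x
  rw [L1, lap_radial (fun s => -16 * (c + s)⁻¹ - 16 * c * ((c + s)⁻¹) ^ 2)
    (fun s => 16 * ((c + s)⁻¹) ^ 2 + 32 * c * ((c + s)⁻¹) ^ 3)
    (fun s => -32 * ((c + s)⁻¹) ^ 3 - 96 * c * ((c + s)⁻¹) ^ 4)]
  · have h0 : 0 < 1 + ‖x‖ ^ 2 / c := by positivity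
    have h00 : c + ‖x‖ ^ 2 ≠ 0 := by positivity
    have : -4 * Real.log (1 + ‖x‖ ^ 2 / c) = Real.log (((1 + ‖x‖ ^ 2 / c) ^ 4)⁻¹) := by
      rw [Real.log_inv, Real.log_pow]; push_cast; ring
    rw [this, Real.exp_log (by positivity)]
    have e : ((1 + ‖x‖ ^ 2 / c) ^ 4)⁻¹ = 384 * c ^ 2 * ((c + ‖x‖ ^ 2)⁻¹) ^ 4 := by
      rw [← hc2]; field_simp
    rw [e]
    field_simp
    ring
  · intro s hs
    have h00 : c + s ≠ 0 := by positivity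
    have hi := ((hasDerivAt_id' s).const_add c).fun_inv h00
    refine HasDerivAt.congr_deriv ((hi.const_mul (-16)).fun_sub ((hi.fun_pow 2).const_mul (16 * c))) ?_
    norm_num
    field_simp
    ring
  · intro s hs
    have h00 : c + s ≠ 0 := by positivity
    have hi := ((hasDerivAt_id' s).const_add c).fun_inv h00
    refine HasDerivAt.congr_deriv (((hi.fun_pow 2).const_mul 16).fun_add ((hi.fun_pow 3).const_mul (32 * c))) ?_
    norm_num
    field_simp
    ring

end
end

section
/- Let Ω ⊆ ℝ⁴ be open, let u, v : Ω → ℝ be twice continuously differentiable, and let y ∈ ℝ⁴. Define the vector field X : Ω → ℝ⁴ by X(x) = ⟨x − y, ∇v(x)⟩·∇u(x) + ⟨x − y, ∇u(x)⟩·∇v(x) − ⟨∇u(x), ∇v(x)⟩·(x − y). Then for every x ∈ Ω, div X(x) = ⟨x − y, ∇v(x)⟩·Δu(x) + ⟨x − y, ∇u(x)⟩·Δv(x) − 2·⟨∇u(x), ∇v(x)⟩. -/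
open scoped RealInnerProductSpace

noncomputable section

/-- The divergence of a vector field `X : ℝ⁴ → ℝ⁴` at `x`: the trace of its derivative. -/
def divg (X : EuclideanSpace ℝ (Fin 4) → EuclideanSpace ℝ (Fin 4))
    (x : EuclideanSpace ℝ (Fin 4)) : ℝ :=
  ∑ i : Fin 4,
    ⟪EuclideanSpace.single i (1:ℝ), fderiv ℝ X x (EuclideanSpace.single i (1:ℝ))⟫

lemma hess_aux (u : EuclideanSpace ℝ (Fin 4) → ℝ) (x : EuclideanSpace ℝ (Fin 4))
    (hu : ContDiffAt ℝ 2 u x) :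
    ∃ H : EuclideanSpace ℝ (Fin 4) →L[ℝ] EuclideanSpace ℝ (Fin 4),
      HasFDerivAt (gradient u) H x ∧ (∀ a b, ⟪H a, b⟫ = ⟪a, H b⟫) ∧
      lap u x = ∑ i : Fin 4, ⟪EuclideanSpace.single i (1:ℝ), H (EuclideanSpace.single i (1:ℝ))⟫ := by
  have hd : DifferentiableAt ℝ (fderiv ℝ u) x :=
    (hu.fderiv_right (m := 1) (by norm_num)).differentiableAt (by norm_num)
  have hs : IsSymmSndFDerivAt ℝ u x := hu.isSymmSndFDerivAt (by simp)
  let T : (EuclideanSpace ℝ (Fin 4) →L[ℝ] ℝ) →L[ℝ] EuclideanSpace ℝ (Fin 4) :=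
    { toFun := fun l => (InnerProductSpace.toDual ℝ (EuclideanSpace ℝ (Fin 4))).symm l
      map_add' := fun a b => map_add _ a b
      map_smul' := fun c a => by simp
      cont := (InnerProductSpace.toDual ℝ (EuclideanSpace ℝ (Fin 4))).symm.continuous }
  have hT : ∀ l a, ⟪T l, a⟫ = l a := fun l a => InnerProductSpace.toDual_symm_apply
  refine ⟨T.comp (fderiv ℝ (fderiv ℝ u) x), ?_, ?_, ?_⟩
  · exact T.hasFDerivAt.comp x hd.hasFDerivAt
  · intro a b
    rw [real_inner_comm (T.comp (fderiv ℝ (fderiv ℝ u) x) b) a]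
    simp only [ContinuousLinearMap.comp_apply, hT]
    exact hs a b
  · unfold lap
    refine Finset.sum_congr rfl fun i _ => ?_
    rw [real_inner_comm, ContinuousLinearMap.comp_apply, hT]
    have := hd.hasFDerivAt.clm_apply
      (hasFDerivAt_const (EuclideanSpace.single i (1:ℝ)) x)
    rw [this.fderiv]
    simp

/-- Pohozaev-type divergence identity: for `u, v` of class `C²` on an open set `Ω ⊆ ℝ⁴` and
`X(x) = ⟨x−y, ∇v⟩∇u + ⟨x−y, ∇u⟩∇v − ⟨∇u, ∇v⟩(x−y)`, one has
`div X = ⟨x−y, ∇v⟩Δu + ⟨x−y, ∇u⟩Δv − 2⟨∇u, ∇v⟩` on `Ω`. -/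
theorem pohozaev_div_identity_uv (Ω : Set (EuclideanSpace ℝ (Fin 4))) (hΩ : IsOpen Ω)
    (u v : EuclideanSpace ℝ (Fin 4) → ℝ)
    (hu : ContDiffOn ℝ 2 u Ω) (hv : ContDiffOn ℝ 2 v Ω)
    (y : EuclideanSpace ℝ (Fin 4)) :
    ∀ x ∈ Ω,
      divg (fun x => ⟪x - y, gradient v x⟫ • gradient u x
          + ⟪x - y, gradient u x⟫ • gradient v x
          - ⟪gradient u x, gradient v x⟫ • (x - y)) x
        = ⟪x - y, gradient v x⟫ * lap u x + ⟪x - y, gradient u x⟫ * lap v x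
          - 2 * ⟪gradient u x, gradient v x⟫ := by
  intro x hx
  obtain ⟨H, hH, sH, lH⟩ := hess_aux u x (hu.contDiffAt (hΩ.mem_nhds hx))
  obtain ⟨L, hL, sL, lL⟩ := hess_aux v x (hv.contDiffAt (hΩ.mem_nhds hx))
  have hz : HasFDerivAt (fun x => x - y) (ContinuousLinearMap.id ℝ _) x :=
    (hasFDerivAt_id x).sub_const y
  have hX := ((((hz.inner ℝ hL).smul hH).add ((hz.inner ℝ hH).smul hL)).sub
    ((hH.inner ℝ hL).smul hz))
  have hX' := hX.fderiv
  rw [lH, lL]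
  unfold divg
  have key : ∀ a b : EuclideanSpace ℝ (Fin 4), ⟪a, b⟫ = ∑ i : Fin 4,
      ⟪a, EuclideanSpace.single i (1:ℝ)⟫ * ⟪EuclideanSpace.single i (1:ℝ), b⟫ := by
    intro a b
    have := (EuclideanSpace.basisFun (Fin 4) ℝ).sum_inner_mul_inner a b
    simpa only [EuclideanSpace.basisFun_apply] using this.symm
  have e1 : ∀ i : Fin 4, ⟪(EuclideanSpace.single i (1:ℝ) : EuclideanSpace ℝ (Fin 4)),
      EuclideanSpace.single i (1:ℝ)⟫ = 1 := by
    intro i; simp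
  set G := gradient u x with hG
  set K := gradient v x with hK
  set z := x - y with hzz
  have k1 := key K G
  have k2 := key (L z) G
  have k3 := key G K
  have k4 := key (H z) K
  have k5 := key (H K) z
  have k6 := key (L G) z
  have c1 := real_inner_comm K G
  have c2 : ⟪H z, K⟫ = ⟪H K, z⟫ := by rw [sH, real_inner_comm]
  have c3 : ⟪L z, G⟫ = ⟪L G, z⟫ := by rw [sL, real_inner_comm]
  have main : ∀ i : Fin 4, ⟪EuclideanSpace.single i (1:ℝ),
      fderiv ℝ (fun x => ⟪x - y, gradient v x⟫ • gradient u x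
          + ⟪x - y, gradient u x⟫ • gradient v x
          - ⟪gradient u x, gradient v x⟫ • (x - y)) x (EuclideanSpace.single i (1:ℝ))⟫
      = ⟪z, K⟫ * ⟪EuclideanSpace.single i (1:ℝ), H (EuclideanSpace.single i (1:ℝ))⟫
      + ⟪z, G⟫ * ⟪EuclideanSpace.single i (1:ℝ), L (EuclideanSpace.single i (1:ℝ))⟫
      + ⟪K, EuclideanSpace.single i (1:ℝ)⟫ * ⟪EuclideanSpace.single i (1:ℝ), G⟫
      + ⟪L z, EuclideanSpace.single i (1:ℝ)⟫ * ⟪EuclideanSpace.single i (1:ℝ), G⟫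
      + ⟪G, EuclideanSpace.single i (1:ℝ)⟫ * ⟪EuclideanSpace.single i (1:ℝ), K⟫
      + ⟪H z, EuclideanSpace.single i (1:ℝ)⟫ * ⟪EuclideanSpace.single i (1:ℝ), K⟫
      - ⟪H K, EuclideanSpace.single i (1:ℝ)⟫ * ⟪EuclideanSpace.single i (1:ℝ), z⟫
      - ⟪L G, EuclideanSpace.single i (1:ℝ)⟫ * ⟪EuclideanSpace.single i (1:ℝ), z⟫
      - ⟪G, K⟫ := by
    intro i
    have e1i := e1 i
    refine (congrArg (fun M : EuclideanSpace ℝ (Fin 4) →L[ℝ] EuclideanSpace ℝ (Fin 4) =>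
      ⟪EuclideanSpace.single i (1:ℝ), M (EuclideanSpace.single i (1:ℝ))⟫) hX').trans ?_
    generalize (EuclideanSpace.single i (1:ℝ) : EuclideanSpace ℝ (Fin 4)) = e at *
    simp only [ContinuousLinearMap.sub_apply, ContinuousLinearMap.add_apply,
      ContinuousLinearMap.smul_apply, ContinuousLinearMap.smulRight_apply,
      ContinuousLinearMap.comp_apply, ContinuousLinearMap.prod_apply, fderivInnerCLM_apply,
      ContinuousLinearMap.id_apply, inner_add_right, inner_sub_right, inner_smul_right,
      ← hG, ← hK, ← hzz, e1i, sH z, sL z, sH K, sL G]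
    rw [real_inner_comm K e, real_inner_comm G e, real_inner_comm (H e) K]
    ring
  rw [Finset.sum_congr rfl fun i _ => main i]
  simp only [Finset.sum_add_distrib, Finset.sum_sub_distrib, ← Finset.mul_sum, ← k1, ← k2, ← k3,
    ← k4, ← k5, ← k6]
  simp only [Finset.sum_const, Finset.card_univ, Fintype.card_fin]
  rw [c2, c3]
  simp only [nsmul_eq_mul]
  push_cast
  linarith
end
end

section
/- Let B be the open unit ball of ℝ⁴. For any two distinct points x, y ∈ B, Boggio's Green function satisfies G(x, y) > 0. -/
open Metric

noncomputable section

/-- Boggio's auxiliary quantity `[x,y] = √(‖x−y‖² + (1−‖x‖²)(1−‖y‖²))`. -/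
def brkt (x y : EuclideanSpace ℝ (Fin 4)) : ℝ :=
  Real.sqrt (‖x - y‖ ^ 2 + (1 - ‖x‖ ^ 2) * (1 - ‖y‖ ^ 2))

/-- Boggio's Green function of the bilaplacian with Dirichlet boundary conditions on the
unit ball of `ℝ⁴`: `G(x,y) = (1/(8π²)) ∫₁^{[x,y]/‖x−y‖} (v²−1)/v³ dv`. -/
def boggioG (x y : EuclideanSpace ℝ (Fin 4)) : ℝ :=
  (1 / (8 * Real.pi ^ 2)) * ∫ v in (1:ℝ)..(brkt x y / ‖x - y‖), (v ^ 2 - 1) / v ^ 3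

/-- Boggio's Green function is positive on the open unit ball. -/
theorem boggioG_pos (x y : EuclideanSpace ℝ (Fin 4))
    (hx : x ∈ ball (0 : EuclideanSpace ℝ (Fin 4)) 1)
    (hy : y ∈ ball (0 : EuclideanSpace ℝ (Fin 4)) 1) (hxy : x ≠ y) :
    0 < boggioG x y := by
  rw [mem_ball_zero_iff] at hx hy
  have hd : 0 < ‖x - y‖ := norm_pos_iff.mpr (sub_ne_zero.mpr hxy)
  have h1 : 0 < 1 - ‖x‖ ^ 2 := by nlinarith [norm_nonneg x]
  have h2 : 0 < 1 - ‖y‖ ^ 2 := by nlinarith [norm_nonneg y]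
  have hlt : 1 < brkt x y / ‖x - y‖ := by
    rw [one_lt_div hd]
    apply Real.lt_sqrt_of_sq_lt
    nlinarith [mul_pos h1 h2]
  have hpi := Real.pi_pos
  unfold boggioG
  apply mul_pos (by positivity)
  apply intervalIntegral.intervalIntegral_pos_of_pos_on _ _ hlt
  · apply ContinuousOn.intervalIntegrable
    rw [Set.uIcc_of_le hlt.le]
    apply ContinuousOn.div (by fun_prop) (by fun_prop)
    intro v hv
    have : 0 < v := lt_of_lt_of_le one_pos hv.1
    positivity
  · intro v hv
    have h : 1 < v := hv.1
    have : 0 < v := one_pos.trans h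
    exact div_pos (by nlinarith) (by positivity)

end
end

section
/- Let B̄ be the closed unit ball of ℝ⁴. For any two distinct points x, y ∈ B̄ with ‖x‖ = 1 (i.e., x on the boundary sphere), Boggio's Green function satisfies G(x, y) = 0, and moreover the derivative in the first variable vanishes: the Fréchet derivative at x of the map z ↦ G(z, y) (defined for z ≠ y) is the zero linear map. -/
open Metric

noncomputable section

/-- Dirichlet boundary conditions for Boggio's Green function: if `‖x‖ = 1`, `y` is in the
closed unit ball and `x ≠ y`, then `G(x,y) = 0` and the Fréchet derivative in the first
variable vanishes at `x`. -/
theorem boggioG_boundary (x y : EuclideanSpace ℝ (Fin 4)) (hx : ‖x‖ = 1)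
    (hy : y ∈ closedBall (0 : EuclideanSpace ℝ (Fin 4)) 1) (hxy : x ≠ y) :
    boggioG x y = 0 ∧ fderiv ℝ (fun z => boggioG z y) x = 0 := by
  have hne : x - y ≠ 0 := sub_ne_zero.mpr hxy
  have hn : ‖x - y‖ ≠ 0 := norm_ne_zero_iff.mpr hne
  have hb : brkt x y / ‖x - y‖ = 1 := by
    unfold brkt
    rw [hx]
    simp only [one_pow, sub_self, zero_mul, add_zero]
    rw [Real.sqrt_sq (norm_nonneg _), div_self hn]
  refine ⟨by unfold boggioG; rw [hb]; simp, ?_⟩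
  have hd : DifferentiableAt ℝ (fun z => brkt z y / ‖z - y‖) x := by
    have h1 : DifferentiableAt ℝ (fun z => ‖z - y‖) x :=
      DifferentiableAt.norm ℝ (by fun_prop) hne
    have h2 : DifferentiableAt ℝ (fun z : EuclideanSpace ℝ (Fin 4) => ‖z‖ ^ 2) x :=
      DifferentiableAt.norm_sq ℝ (by fun_prop)
    have h3 : DifferentiableAt ℝ (fun z => brkt z y) x := by
      unfold brkt
      refine DifferentiableAt.sqrt (by fun_prop) ?_
      rw [hx]
      simpa using hne
    simp only [div_eq_mul_inv]
    exact h3.mul (h1.fun_inv hn)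
  have hF : HasDerivAt (fun t : ℝ => ∫ v in (1:ℝ)..t, (v ^ 2 - 1) / v ^ 3)
      (((1:ℝ) ^ 2 - 1) / 1 ^ 3) 1 := by
    apply intervalIntegral.integral_hasDerivAt_right
    · simp
    · exact (Measurable.stronglyMeasurable (by fun_prop)).stronglyMeasurableAtFilter
    · exact ContinuousAt.div (by fun_prop) (by fun_prop) (by norm_num)
  have hF2 : HasDerivAt (fun t : ℝ => ∫ v in (1:ℝ)..t, (v ^ 2 - 1) / v ^ 3)
      0 (brkt x y / ‖x - y‖) := by
    rw [hb]
    simpa using hF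
  have hc := (HasDerivAt.comp_hasFDerivAt x hF2 hd.hasFDerivAt).const_mul
    (1 / (8 * Real.pi ^ 2))
  have h0 := hc.fderiv
  unfold boggioG
  refine Eq.trans h0 ?_
  simp

end
end

section
/- Define g : ℝ⁴ ∖ {0} → ℝ by g(x) = (1/(8π²))·( log(1/‖x‖) + ‖x‖²/2 − 1/2 ). Then g is smooth on ℝ⁴ ∖ {0}, it is biharmonic there, i.e. Δ(Δg)(x) = 0 for every x ≠ 0, and it satisfies the Dirichlet boundary conditions on the unit sphere: g(x) = 0 and the Fréchet derivative of g at x is the zero linear map, for every x with ‖x‖ = 1. -/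
noncomputable section

/-- First derivative of a radial function. -/
lemma radial_hasFDerivAt {f : EuclideanSpace ℝ (Fin 4) → ℝ} {φ φ' : ℝ → ℝ}
    (hf : ∀ x, x ≠ 0 → f x = φ (‖x‖ ^ 2))
    (h1 : ∀ s, 0 < s → HasDerivAt φ (φ' s) s)
    (x : EuclideanSpace ℝ (Fin 4)) (hx : x ≠ 0) :
    HasFDerivAt f (φ' (‖x‖ ^ 2) • (2 • innerSL ℝ x)) x := by
  have hpos : 0 < ‖x‖ ^ 2 := by positivity
  have hn := (hasStrictFDerivAt_norm_sq x).hasFDerivAt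
  have h := (h1 _ hpos).comp_hasFDerivAt x hn
  refine h.congr_of_eventuallyEq ?_
  filter_upwards [isOpen_ne.mem_nhds hx] with y hy
  exact hf y hy

/-- Laplacian of a radial function on `ℝ⁴`. -/
lemma radial_lap {f : EuclideanSpace ℝ (Fin 4) → ℝ} {φ φ' φ'' : ℝ → ℝ}
    (hf : ∀ x, x ≠ 0 → f x = φ (‖x‖ ^ 2))
    (h1 : ∀ s, 0 < s → HasDerivAt φ (φ' s) s)
    (h2 : ∀ s, 0 < s → HasDerivAt φ' (φ'' s) s)
    (x : EuclideanSpace ℝ (Fin 4)) (hx : x ≠ 0) :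
    lap f x = 4 * ‖x‖ ^ 2 * φ'' (‖x‖ ^ 2) + 8 * φ' (‖x‖ ^ 2) := by
  have key : ∀ i : Fin 4,
      fderiv ℝ (fun y => fderiv ℝ f y (EuclideanSpace.single i (1:ℝ))) x
        (EuclideanSpace.single i (1:ℝ))
      = 4 * φ'' (‖x‖ ^ 2) * x i ^ 2 + 2 * φ' (‖x‖ ^ 2) := by
    intro i
    have hd : HasFDerivAt (fun y : EuclideanSpace ℝ (Fin 4) => φ' (‖y‖ ^ 2))
        (φ'' (‖x‖ ^ 2) • (2 • innerSL ℝ x)) x :=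
      radial_hasFDerivAt (fun _ _ => rfl) h2 x hx
    have hp : HasFDerivAt (fun y : EuclideanSpace ℝ (Fin 4) => y i)
        (EuclideanSpace.proj i : EuclideanSpace ℝ (Fin 4) →L[ℝ] ℝ) x :=
      (EuclideanSpace.proj i : EuclideanSpace ℝ (Fin 4) →L[ℝ] ℝ).hasFDerivAt
    have hm := (hd.mul hp).const_mul 2
    have hm' : HasFDerivAt (fun y => fderiv ℝ f y (EuclideanSpace.single i (1:ℝ))) _ x :=
      hm.congr_of_eventuallyEq (by
        filter_upwards [isOpen_ne.mem_nhds hx] with y hy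
        rw [(radial_hasFDerivAt hf h1 y hy).fderiv]
        simp [EuclideanSpace.inner_single_right]
        ring)
    rw [hm'.fderiv]
    simp [EuclideanSpace.inner_single_right]
    ring
  unfold lap
  rw [Finset.sum_congr rfl (fun i _ => key i), EuclideanSpace.real_norm_sq_eq]
  simp only [Fin.sum_univ_four]
  ring

/-- The Green function of the bilaplacian of the unit ball with pole at the origin,
`g(x) = (1/(8π²))( log(1/‖x‖) + ‖x‖²/2 − 1/2 )`: it is smooth away from `0`, biharmonic
away from `0`, and satisfies the Dirichlet boundary conditions on the unit sphere. -/
theorem green_pole_origin :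
    ContDiffOn ℝ (⊤ : ℕ∞)
      (fun x : EuclideanSpace ℝ (Fin 4) =>
        (1 / (8 * Real.pi ^ 2)) * (Real.log (1 / ‖x‖) + ‖x‖ ^ 2 / 2 - 1 / 2))
      {(0 : EuclideanSpace ℝ (Fin 4))}ᶜ ∧
    (∀ x : EuclideanSpace ℝ (Fin 4), x ≠ 0 →
      lap (lap (fun x : EuclideanSpace ℝ (Fin 4) =>
        (1 / (8 * Real.pi ^ 2)) * (Real.log (1 / ‖x‖) + ‖x‖ ^ 2 / 2 - 1 / 2))) x = 0) ∧
    (∀ x : EuclideanSpace ℝ (Fin 4), ‖x‖ = 1 →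
      (1 / (8 * Real.pi ^ 2)) * (Real.log (1 / ‖x‖) + ‖x‖ ^ 2 / 2 - 1 / 2) = 0 ∧
      fderiv ℝ
        (fun x : EuclideanSpace ℝ (Fin 4) =>
          (1 / (8 * Real.pi ^ 2)) * (Real.log (1 / ‖x‖) + ‖x‖ ^ 2 / 2 - 1 / 2)) x = 0) := by
  generalize 1 / (8 * Real.pi ^ 2) = c
  have hf : ∀ x : EuclideanSpace ℝ (Fin 4), x ≠ 0 →
      (fun x : EuclideanSpace ℝ (Fin 4) =>
        c * (Real.log (1 / ‖x‖) + ‖x‖ ^ 2 / 2 - 1 / 2)) x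
      = (fun s : ℝ => c * (-(Real.log s / 2) + s / 2 - 1 / 2)) (‖x‖ ^ 2) := by
    intro x hx
    simp only [one_div, Real.log_inv, Real.log_pow]
    push_cast
    ring
  have h1 : ∀ s : ℝ, 0 < s → HasDerivAt (fun s : ℝ => c * (-(Real.log s / 2) + s / 2 - 1 / 2))
      ((fun s : ℝ => c * (-(s⁻¹ / 2) + 1 / 2)) s) s := by
    intro s hs
    exact ((((Real.hasDerivAt_log hs.ne').div_const 2).neg.add
      ((hasDerivAt_id s).div_const 2)).sub_const (1 / 2)).const_mul c
  have h2 : ∀ s : ℝ, 0 < s → HasDerivAt (fun s : ℝ => c * (-(s⁻¹ / 2) + 1 / 2))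
      ((fun s : ℝ => c * (-(-(s ^ 2)⁻¹ / 2))) s) s := by
    intro s hs
    exact (((hasDerivAt_inv hs.ne').div_const 2).neg.add_const (1 / 2)).const_mul c
  refine ⟨?_, ?_, ?_⟩
  · intro x hx
    have hx' : x ≠ 0 := hx
    have hn : ContDiffAt ℝ (⊤ : ℕ∞) (fun x : EuclideanSpace ℝ (Fin 4) => ‖x‖) x :=
      contDiffAt_norm ℝ hx'
    have hl : ContDiffAt ℝ (⊤ : ℕ∞)
        (fun x : EuclideanSpace ℝ (Fin 4) => Real.log (1 / ‖x‖)) x := by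
      refine (contDiffAt_const.div hn (norm_ne_zero_iff.2 hx')).log ?_
      exact one_div_ne_zero (norm_ne_zero_iff.2 hx')
    exact (contDiffAt_const.mul ((hl.add ((hn.pow 2).div_const 2)).sub
      contDiffAt_const)).contDiffWithinAt
  · intro x hx
    have hl : ∀ y : EuclideanSpace ℝ (Fin 4), y ≠ 0 →
        lap (fun x : EuclideanSpace ℝ (Fin 4) =>
          c * (Real.log (1 / ‖x‖) + ‖x‖ ^ 2 / 2 - 1 / 2)) y
        = (fun s : ℝ => c * (4 - 2 * s⁻¹)) (‖y‖ ^ 2) := by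
      intro y hy
      rw [radial_lap hf h1 h2 y hy]
      have : ‖y‖ ≠ 0 := norm_ne_zero_iff.2 hy
      field_simp
      ring
    have k1 : ∀ s : ℝ, 0 < s → HasDerivAt (fun s : ℝ => c * (4 - 2 * s⁻¹))
        ((fun s : ℝ => 2 * c * (s ^ 2)⁻¹) s) s := by
      intro s hs
      refine ((((hasDerivAt_inv hs.ne').const_mul 2).const_sub 4).const_mul c).congr_deriv ?_
      ring
    have k2 : ∀ s : ℝ, 0 < s → HasDerivAt (fun s : ℝ => 2 * c * (s ^ 2)⁻¹)
        ((fun s : ℝ => -(4 * c) * (s ^ 3)⁻¹) s) s := by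
      intro s hs
      refine (((hasDerivAt_pow 2 s).inv (by positivity)).const_mul (2 * c)).congr_deriv ?_
      field_simp
      norm_num
      ring
    rw [radial_lap hl k1 k2 x hx]
    have : ‖x‖ ≠ 0 := norm_ne_zero_iff.2 hx
    field_simp
    ring
  · intro x hx
    have hx' : x ≠ 0 := by
      rintro rfl
      simp at hx
    refine ⟨by simp [hx], ?_⟩
    rw [(radial_hasFDerivAt hf h1 x hx').fderiv]
    simp [hx]

end
end

section
/- Let B be the open unit ball of ℝ⁴ and define R : B × B → ℝ by R(x,y) = (1/(8π²))·( log [x,y] + ‖x−y‖²/(2·[x,y]²) − 1/2 ), where [x,y] := √(‖x−y‖² + (1−‖x‖²)(1−‖y‖²)) (note [x,y] > 0 for x, y ∈ B, so R is smooth on B × B). Then: (i) for every P ∈ B, R(P,P) = (1/(8π²))·( log(1−‖P‖²) − 1/2 ), and the map P ↦ R(P,P) attains its maximum over B uniquely at P = 0; (ii) R(x,0) = (1/(8π²))·( ‖x‖²/2 − 1/2 ) for all x ∈ B, and the Laplacian in x of the map x ↦ R(x,0) equals the constant 1/(2π²); (iii) with R₁(0,0) := 4·(2 − ‖0‖²)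 = 8, one has R₁(0,0) + 16π²·Δₓ R(0,0) = 16 > 0. -/
open Metric

noncomputable section

/-- The regular part of Boggio's Green function on the unit ball:
`R(x,y) = (1/(8π²))( log [x,y] + ‖x−y‖²/(2[x,y]²) − 1/2 )`. -/
def regR (x y : EuclideanSpace ℝ (Fin 4)) : ℝ :=
  (1 / (8 * Real.pi ^ 2)) *
    (Real.log (brkt x y) + ‖x - y‖ ^ 2 / (2 * brkt x y ^ 2) - 1 / 2)

theorem brkt_zero_right (x : EuclideanSpace ℝ (Fin 4)) : brkt x 0 = 1 := by
  simp [brkt]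

theorem regR_zero_right (x : EuclideanSpace ℝ (Fin 4)) :
    regR x 0 = (1 / (8 * Real.pi ^ 2)) * (‖x‖ ^ 2 / 2 - 1 / 2) := by
  simp [regR, brkt_zero_right]

theorem regR_diag (P : EuclideanSpace ℝ (Fin 4)) (hP : ‖P‖ < 1) :
    regR P P = (1 / (8 * Real.pi ^ 2)) * (Real.log (1 - ‖P‖ ^ 2) - 1 / 2) := by
  have h : 0 ≤ 1 - ‖P‖ ^ 2 := by nlinarith [norm_nonneg P]
  have hb : brkt P P = 1 - ‖P‖ ^ 2 := by
    simp [brkt, Real.sqrt_mul_self h]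
  simp [regR, hb]

theorem lap_regR (x : EuclideanSpace ℝ (Fin 4)) :
    lap (fun z => regR z 0) x = 1 / (2 * Real.pi ^ 2) := by
  have h1 : ∀ (y : EuclideanSpace ℝ (Fin 4)) (i : Fin 4),
      fderiv ℝ (fun z => regR z 0) y (EuclideanSpace.single i (1:ℝ))
        = (1 / (8 * Real.pi ^ 2)) * y i := by
    intro y i
    have h2 : HasFDerivAt (fun z : EuclideanSpace ℝ (Fin 4) =>
        (1 / (8 * Real.pi ^ 2)) * (‖z‖ ^ 2 * (1 / 2) - 1 / 2)) _ y :=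
      (((hasStrictFDerivAt_norm_sq y).hasFDerivAt.mul_const (1 / 2 : ℝ)).sub_const
        (1 / 2 : ℝ)).const_mul (1 / (8 * Real.pi ^ 2))
    have h3 : (fun z => regR z 0) = (fun z : EuclideanSpace ℝ (Fin 4) =>
        (1 / (8 * Real.pi ^ 2)) * (‖z‖ ^ 2 * (1 / 2) - 1 / 2)) := by
      funext z
      rw [regR_zero_right]
      ring
    rw [h3, h2.fderiv]
    simp [EuclideanSpace.inner_single_right]
  have h4 : ∀ i : Fin 4, fderiv ℝ (fun y : EuclideanSpace ℝ (Fin 4) =>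
      (1 / (8 * Real.pi ^ 2)) * y i) x (EuclideanSpace.single i (1:ℝ))
        = 1 / (8 * Real.pi ^ 2) := by
    intro i
    have h5 := (((EuclideanSpace.proj i : EuclideanSpace ℝ (Fin 4) →L[ℝ] ℝ)).hasFDerivAt
      (x := x)).const_mul (1 / (8 * Real.pi ^ 2))
    have h6 : fderiv ℝ (fun y : EuclideanSpace ℝ (Fin 4) =>
      (1 / (8 * Real.pi ^ 2)) * y i) x = _ := h5.fderiv
    rw [h6]
    simp
  simp only [lap, h1, h4]
  simp
  ring

/-- Properties of the regular part of Boggio's Green function on the unit ball `B`: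
(i) the value of the Robin function `P ↦ R(P,P)` and the fact that it is uniquely maximized
at the origin; (ii) the formula for `R(·,0)` and its Laplacian; (iii) the positivity
condition `R₁(0,0) + 16π² Δₓ R(0,0) = 16 > 0`. -/
theorem regular_part_properties :
    (∀ P ∈ ball (0 : EuclideanSpace ℝ (Fin 4)) 1,
      regR P P = (1 / (8 * Real.pi ^ 2)) * (Real.log (1 - ‖P‖ ^ 2) - 1 / 2)) ∧
    (∀ P ∈ ball (0 : EuclideanSpace ℝ (Fin 4)) 1, P ≠ 0 →
      regR P P < regR 0 0) ∧
    (∀ x ∈ ball (0 : EuclideanSpace ℝ (Fin 4)) 1,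
      regR x 0 = (1 / (8 * Real.pi ^ 2)) * (‖x‖ ^ 2 / 2 - 1 / 2)) ∧
    (∀ x ∈ ball (0 : EuclideanSpace ℝ (Fin 4)) 1,
      lap (fun z => regR z 0) x = 1 / (2 * Real.pi ^ 2)) ∧
    (4 * (2 - ‖(0 : EuclideanSpace ℝ (Fin 4))‖ ^ 2)
        + 16 * Real.pi ^ 2 * lap (fun z => regR z 0) 0 = 16 ∧ (0:ℝ) < 16) := by
  refine ⟨?_, ?_, fun x _ => regR_zero_right x, fun x _ => lap_regR x, ?_, by norm_num⟩
  · intro P hP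
    exact regR_diag P (by simpa using hP)
  · intro P hP h0
    have hP1 : ‖P‖ < 1 := by simpa using hP
    have hpos : 0 < ‖P‖ := norm_pos_iff.mpr h0
    rw [regR_diag P hP1, regR_diag 0 (by simp)]
    have hlog : Real.log (1 - ‖P‖ ^ 2) < 0 := by
      apply Real.log_neg <;> nlinarith
    have hpi := Real.pi_pos
    apply mul_lt_mul_of_pos_left _ (by positivity)
    simp only [norm_zero]
    norm_num
    linarith
  · rw [lap_regR]
    have hpi := Real.pi_ne_zero
    simp only [norm_zero]
    field_simp
    norm_num

end
end

section
/- Let B̄ be the closed unit ball of ℝ⁴. There exists a constant C > 0 such that for all distinct x, y ∈ B̄, Boggio's Green function satisfies |G(x,y)| ≤ C·log(2 + 1/‖x−y‖). -/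
open Metric

noncomputable section

/-- Logarithmic bound for Boggio's Green function on the closed unit ball:
`|G(x,y)| ≤ C log(2 + 1/‖x−y‖)`. -/
theorem boggioG_log_bound :
    ∃ C > (0:ℝ), ∀ x ∈ closedBall (0 : EuclideanSpace ℝ (Fin 4)) 1,
      ∀ y ∈ closedBall (0 : EuclideanSpace ℝ (Fin 4)) 1, x ≠ y →
        |boggioG x y| ≤ C * Real.log (2 + 1 / ‖x - y‖) := by
  refine ⟨(1 / (8 * Real.pi ^ 2)) * 2, by positivity, ?_⟩
  intro x hx y hy hxy
  have hx1 : ‖x‖ ≤ 1 := by simpa using hx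
  have hy1 : ‖y‖ ≤ 1 := by simpa using hy
  have hd : 0 < ‖x - y‖ := norm_pos_iff.mpr (sub_ne_zero.mpr hxy)
  have hd2 : ‖x - y‖ ≤ 2 := (norm_sub_le x y).trans (by linarith)
  have hx0 := norm_nonneg x
  have hy0 := norm_nonneg y
  have hX : 0 ≤ 1 - ‖x‖ ^ 2 := by nlinarith
  have hY : 0 ≤ 1 - ‖y‖ ^ 2 := by nlinarith
  have hb1 : ‖x - y‖ ≤ brkt x y := by
    apply Real.le_sqrt_of_sq_le
    nlinarith [mul_nonneg hX hY]
  have hb3 : brkt x y ≤ 3 := by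
    apply Real.sqrt_le_iff.mpr
    refine ⟨by norm_num, ?_⟩
    have h1 : (1 - ‖x‖ ^ 2) * (1 - ‖y‖ ^ 2) ≤ 1 := by
      apply mul_le_one₀ _ hY <;> nlinarith
    nlinarith
  have hR1 : 1 ≤ brkt x y / ‖x - y‖ := by rwa [one_le_div hd]
  have hint : |∫ v in (1:ℝ)..(brkt x y / ‖x - y‖), (v ^ 2 - 1) / v ^ 3|
      ≤ Real.log (brkt x y / ‖x - y‖) := by
    have h0 : (0:ℝ) ∉ Set.uIcc 1 (brkt x y / ‖x - y‖) := by
      rw [Set.uIcc_of_le hR1]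
      intro h
      linarith [h.1]
    have h := intervalIntegral.norm_integral_le_of_norm_le (μ := MeasureTheory.volume)
      (f := fun v : ℝ => (v ^ 2 - 1) / v ^ 3) (g := fun v : ℝ => 1 / v) hR1
      (Filter.Eventually.of_forall (fun v hv => by
        have hv1 : 1 < v := hv.1
        have hv0 : 0 < v := by linarith
        rw [Real.norm_of_nonneg (div_nonneg (by nlinarith) (by positivity)),
          div_le_div_iff₀ (by positivity) hv0]
        nlinarith))
      (intervalIntegral.intervalIntegrable_one_div (fun v hv => by
        rintro rfl
        exact h0 hv) continuousOn_id)
    rw [integral_one_div h0, div_one] at h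
    exact h
  have hlog : Real.log (brkt x y / ‖x - y‖) ≤ 2 * Real.log (2 + 1 / ‖x - y‖) := by
    rw [← Real.log_rpow (by positivity)]
    apply Real.log_le_log (by linarith)
    have h1 : brkt x y / ‖x - y‖ ≤ 3 * (1 / ‖x - y‖) := by
      rw [mul_one_div]
      gcongr
    have h2 : 0 < 1 / ‖x - y‖ := by positivity
    norm_num only [Real.rpow_two]
    nlinarith
  unfold boggioG
  rw [abs_mul, abs_of_pos (by positivity : 0 < 1 / (8 * Real.pi ^ 2)), mul_assoc]
  exact mul_le_mul_of_nonneg_left (hint.trans hlog) (by positivity)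

end
end

section
/- Let B̄ be the closed unit ball of ℝ⁴. There exists a constant C > 0 such that for all distinct x, y ∈ B̄, the map z ↦ G(z,y) is differentiable at x (as a function on B̄ ∖ {y}, equivalently the closed-form expression is differentiable in its first variable) and the operator norm of its Fréchet derivative at x satisfies ‖D_x G(x,y)‖ ≤ C/‖x−y‖. -/
open Metric

noncomputable section

lemma bog_arith (a b d : ℝ) (ha : 0 ≤ a) (hb : 0 ≤ b) (hd : 0 < d) (hab : b ≤ a + 2 * d) :
    b * d ≤ 4 * (d ^ 2 + a * b) := by
  rcases le_total b (4 * d) with h | h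
  · nlinarith [mul_nonneg ha hb]
  · have h1 : b / 2 ≤ a := by linarith
    nlinarith [mul_le_mul_of_nonneg_right h1 hb]

lemma bog_int (r : ℝ) (hr : 1 ≤ r) :
    HasDerivAt (fun u : ℝ => ∫ v in (1:ℝ)..u, (v ^ 2 - 1) / v ^ 3) ((r ^ 2 - 1) / r ^ 3) r := by
  have hc : ContinuousOn (fun v : ℝ => (v ^ 2 - 1) / v ^ 3) (Set.Ioi 0) := by
    intro v hv
    have : v ≠ 0 := ne_of_gt hv
    apply ContinuousAt.continuousWithinAt
    fun_prop (disch := positivity)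
  have hr0 : r ∈ Set.Ioi (0:ℝ) := by simp; linarith
  apply intervalIntegral.integral_hasDerivAt_right
  · apply ContinuousOn.intervalIntegrable
    apply hc.mono
    rw [Set.uIcc_of_le hr]
    intro v hv
    simp
    linarith [hv.1]
  · exact hc.stronglyMeasurableAtFilter isOpen_Ioi r hr0
  · exact hc.continuousAt (isOpen_Ioi.mem_nhds hr0)

/-- the square of the upper limit -/
def bogq (x y : EuclideanSpace ℝ (Fin 4)) : ℝ :=
  (‖x - y‖ ^ 2 + (1 - ‖x‖ ^ 2) * (1 - ‖y‖ ^ 2)) / ‖x - y‖ ^ 2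

lemma bog_eq (x y : EuclideanSpace ℝ (Fin 4)) : brkt x y / ‖x - y‖ = √(bogq x y) := by
  unfold brkt bogq
  rw [Real.sqrt_div' _ (by positivity), Real.sqrt_sq (norm_nonneg _)]

lemma bogq_deriv (x y : EuclideanSpace ℝ (Fin 4)) (h : x ≠ y) :
    HasFDerivAt (fun z => bogq z y)
      ((-(2 * (1 - ‖y‖ ^ 2) / ‖x - y‖ ^ 2)) • innerSL ℝ x
        + (-(2 * ((1 - ‖x‖ ^ 2) * (1 - ‖y‖ ^ 2)) / ‖x - y‖ ^ 4)) • innerSL ℝ (x - y)) x := by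
  have hd : ‖x - y‖ ≠ 0 := by simpa [sub_eq_zero] using h
  have h1 : HasFDerivAt (fun z : EuclideanSpace ℝ (Fin 4) => ‖z - y‖ ^ 2) _ x :=
    ((hasFDerivAt_id x).sub_const y).norm_sq
  have h2 : HasFDerivAt (fun z : EuclideanSpace ℝ (Fin 4) => ‖z‖ ^ 2) _ x :=
    (hasFDerivAt_id x).norm_sq
  have h3 := (h1.add ((h2.const_sub 1).mul_const (1 - ‖y‖ ^ 2))).mul
    ((hasDerivAt_inv (pow_ne_zero 2 hd)).comp_hasFDerivAt x h1)
  refine HasFDerivAt.congr_fderiv (h3.congr_of_eventuallyEq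
    (Filter.Eventually.of_forall fun z => by simp [bogq, div_eq_mul_inv])) ?_
  ext v
  simp [innerSL_apply_apply]
  field_simp
  ring

lemma bog_main (x y : EuclideanSpace ℝ (Fin 4)) (hx : ‖x‖ ≤ 1) (hy : ‖y‖ ≤ 1) (h : x ≠ y) :
    ∃ L : EuclideanSpace ℝ (Fin 4) →L[ℝ] ℝ, HasFDerivAt (fun z => boggioG z y) L x ∧ ‖L‖ ≤ 5 / ‖x - y‖ := by
  have hd : 0 < ‖x - y‖ := by simpa [sub_eq_zero] using h
  have hq := bogq_deriv x y h
  have ha : 0 ≤ 1 - ‖x‖ ^ 2 := by nlinarith [norm_nonneg x]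
  have hb : 0 ≤ 1 - ‖y‖ ^ 2 := by nlinarith [norm_nonneg y]
  have hab : 1 - ‖y‖ ^ 2 ≤ 1 - ‖x‖ ^ 2 + 2 * ‖x - y‖ := by
    have := norm_sub_norm_le x y
    nlinarith [norm_nonneg x, norm_nonneg y]
  have har := bog_arith _ _ _ ha hb hd hab
  have hnx := norm_nonneg x
  have hqe : bogq x y = 1 + (1 - ‖x‖ ^ 2) * (1 - ‖y‖ ^ 2) / ‖x - y‖ ^ 2 := by
    unfold bogq; field_simp
  have hq1 : 1 ≤ bogq x y := by
    rw [hqe]; have : 0 ≤ (1 - ‖x‖ ^ 2) * (1 - ‖y‖ ^ 2) / ‖x - y‖ ^ 2 := by positivity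
    linarith
  have hq0 : 0 < bogq x y := by linarith
  have hs := hq.sqrt hq0.ne'
  have hI := (bog_int (√(bogq x y)) (by rwa [Real.one_le_sqrt])).comp_hasFDerivAt x hs
  have hG := hI.const_mul (1 / (8 * Real.pi ^ 2))
  refine ⟨_, hG.congr_of_eventuallyEq (Filter.Eventually.of_forall fun z => ?_), ?_⟩
  · simp [boggioG, bog_eq]
  set t := bogq x y with ht
  set d := ‖x - y‖ with hdd
  set a := 1 - ‖x‖ ^ 2
  set b := 1 - ‖y‖ ^ 2
  have hs0 : 0 < √t := Real.sqrt_pos.2 hq0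
  have hss : √t ^ 2 = t := Real.sq_sqrt hq0.le
  have hcoef : (√t ^ 2 - 1) / √t ^ 3 * (1 / (2 * √t)) = (t - 1) / (2 * t ^ 2) := by
    rw [show (√t ^ 2 - 1) / √t ^ 3 * (1 / (2 * √t)) = (√t ^ 2 - 1) / (2 * (√t ^ 2) ^ 2) by
      field_simp, hss]
  have hpi : 1 / (8 * Real.pi ^ 2) ≤ 1 := by
    rw [div_le_one (by positivity)]; nlinarith [Real.pi_gt_three]
  have ht1 : 0 ≤ t - 1 := by linarith
  rw [norm_smul, smul_smul, norm_smul, hcoef, Real.norm_of_nonneg (by positivity),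
    Real.norm_of_nonneg (by positivity)]
  have hN : ‖(-(2 * b / d ^ 2)) • innerSL ℝ x + (-(2 * (a * b) / d ^ 4)) • innerSL ℝ (x - y)‖
      ≤ 2 * b / d ^ 2 + 2 * (t - 1) / d := by
    refine (norm_add_le _ _).trans ?_
    rw [norm_smul, norm_smul, innerSL_apply_norm, innerSL_apply_norm, norm_neg, norm_neg,
      Real.norm_of_nonneg (by positivity), Real.norm_of_nonneg (by positivity), ← hdd]
    have e : 2 * (a * b) / d ^ 4 * d = 2 * (t - 1) / d := by rw [hqe]; field_simp; ring
    rw [e]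
    have : 2 * b / d ^ 2 * ‖x‖ ≤ 2 * b / d ^ 2 := mul_le_of_le_one_right (by positivity) hx
    linarith
  have hbt : b ≤ 4 * t * d := by
    have : 4 * t * d * d = 4 * (d ^ 2 + a * b) := by rw [hqe]; field_simp
    nlinarith
  have hfin : (t - 1) / (2 * t ^ 2) * (2 * b / d ^ 2 + 2 * (t - 1) / d) ≤ 5 / d := by
    have : (t - 1) / (2 * t ^ 2) * (2 * b / d ^ 2 + 2 * (t - 1) / d)
      ≤ (t - 1) / (2 * t ^ 2) * (2 * (4 * t * d) / d ^ 2 + 2 * (t - 1) / d) := by gcongr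
    refine this.trans ?_
    rw [show (t - 1) / (2 * t ^ 2) * (2 * (4 * t * d) / d ^ 2 + 2 * (t - 1) / d)
      = ((t - 1) * (4 * t + (t - 1)) / t ^ 2) / d by field_simp]
    gcongr
    rw [div_le_iff₀ (by positivity)]
    nlinarith
  calc _ ≤ 1 * ((t - 1) / (2 * t ^ 2) * (2 * b / d ^ 2 + 2 * (t - 1) / d)) := by gcongr
    _ ≤ 5 / d := by linarith

/-- Gradient bound for Boggio's Green function on the closed unit ball: the map
`z ↦ G(z,y)`, as a function on `B̄ ∖ {y}`, is differentiable at `x` and the operator norm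
of its derivative is at most `C/‖x−y‖`. -/
theorem boggioG_gradient_bound :
    ∃ C > (0:ℝ), ∀ x ∈ closedBall (0 : EuclideanSpace ℝ (Fin 4)) 1,
      ∀ y ∈ closedBall (0 : EuclideanSpace ℝ (Fin 4)) 1, x ≠ y →
        DifferentiableWithinAt ℝ (fun z => boggioG z y)
          (closedBall (0 : EuclideanSpace ℝ (Fin 4)) 1 \ {y}) x ∧
        ‖fderivWithin ℝ (fun z => boggioG z y)
            (closedBall (0 : EuclideanSpace ℝ (Fin 4)) 1 \ {y}) x‖ ≤ C / ‖x - y‖ := by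
  refine ⟨5, by norm_num, fun x hx y hy hxy => ?_⟩
  obtain ⟨L, hL, hn⟩ := bog_main x y (by simpa using hx) (by simpa using hy) hxy
  refine ⟨hL.differentiableAt.differentiableWithinAt, ?_⟩
  have hu : UniqueDiffWithinAt ℝ (closedBall (0 : EuclideanSpace ℝ (Fin 4)) 1 \ {y}) x := by
    have h1 : UniqueDiffWithinAt ℝ (closedBall (0 : EuclideanSpace ℝ (Fin 4)) 1) x := by
      apply uniqueDiffOn_convex (convex_closedBall _ _) _ x hx
      rw [interior_closedBall _ one_ne_zero]
      exact ⟨0, by simp⟩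
    rw [Set.diff_eq]
    exact h1.inter (isOpen_compl_singleton.mem_nhds hxy)
  rw [hL.hasFDerivWithinAt.fderivWithin hu]
  exact hn

end
end

section
/- Let Ω ⊆ ℝ⁴ be a bounded measurable set, let i ∈ {1,2,3}, and let p be a real number with 1 < p < 4/i. Then there exists a constant C > 0 (depending only on Ω, i, and p) such that for every nonnegative integrable function w on Ω, the function v(x) := ∫_Ω ‖x−y‖^{−i}·w(y) dy satisfies ∫_Ω v(x)^p dx ≤ C·(∫_Ω w(y) dy)^p. -/
open MeasureTheory

/-- Finiteness of the singular kernel on balls. -/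
lemma riesz_aux_kernel (a : ℝ) (ha0 : 0 < a) (ha : a < 4) (R : ℝ) :
    ∫⁻ x in Metric.closedBall (0 : EuclideanSpace ℝ (Fin 4)) R, (edist x 0) ^ (-a) ≠ ⊤ := by
  have hm : Measurable (fun x : EuclideanSpace ℝ (Fin 4) => ‖x‖ ^ (-a)) := by fun_prop
  have h1 : LocallyIntegrable (fun x : EuclideanSpace ℝ (Fin 4) => ‖x‖ ^ (-a)) volume := by
    refine locallyIntegrable_of_norm_le_rpow (C := 1) (α := a) (by simp) (by simpa using ha) ?_
      hm.aestronglyMeasurable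
    refine Filter.Eventually.of_forall fun x => ?_
    rw [one_mul, Real.norm_of_nonneg (by positivity)]
  have h2 := (h1.integrableOn_isCompact (isCompact_closedBall 0 R)).lintegral_lt_top
  refine (lt_of_le_of_lt (le_of_eq ?_) h2).ne
  refine lintegral_congr_ae (ae_restrict_of_ae ?_)
  have h0 : ∀ᵐ x : EuclideanSpace ℝ (Fin 4), x ≠ 0 := by
    simp [ae_iff]
  filter_upwards [h0] with x hx
  rw [edist_dist, dist_zero_right, ENNReal.ofReal_rpow_of_pos (norm_pos_iff.mpr hx)]

/-- Jensen / Hölder with respect to an arbitrary measure. -/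
lemma riesz_aux_holder {α : Type*} [MeasurableSpace α] (ν : Measure α) (p : ℝ) (hp : 1 < p)
    (f : α → ENNReal) (hf : AEMeasurable f ν) :
    (∫⁻ y, f y ∂ν) ^ p ≤ (∫⁻ y, f y ^ p ∂ν) * (ν Set.univ) ^ (p - 1) := by
  have hpq := Real.HolderConjugate.conjExponent hp
  have h := ENNReal.lintegral_mul_le_Lp_mul_Lq ν hpq hf (aemeasurable_const (b := 1))
  simp only [Pi.mul_apply, mul_one, ENNReal.one_rpow, lintegral_const, one_mul] at h
  have hp0 : 0 < p := by linarith
  refine (ENNReal.rpow_le_rpow h hp0.le).trans (le_of_eq ?_)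
  rw [ENNReal.mul_rpow_of_nonneg _ _ hp0.le, ← ENNReal.rpow_mul, ← ENNReal.rpow_mul,
    one_div_mul_cancel hp0.ne', ENNReal.rpow_one]
  congr 2
  have : p - 1 ≠ 0 := by linarith
  rw [Real.conjExponent]
  field_simp

/-- Riesz-type potential estimate: for `Ω ⊆ ℝ⁴` bounded and measurable, `i ∈ {1,2,3}` and
`1 < p < 4/i`, there is `C > 0` such that for every nonnegative integrable `w` on `Ω`,
the potential `v(x) = ∫_Ω ‖x−y‖^{−i} w(y) dy` satisfies
`∫_Ω v^p dx ≤ C (∫_Ω w dy)^p`. -/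
theorem riesz_potential_Lp_bound (Ω : Set (EuclideanSpace ℝ (Fin 4)))
    (hmeas : MeasurableSet Ω) (hbdd : Bornology.IsBounded Ω)
    (i : ℕ) (hi : i = 1 ∨ i = 2 ∨ i = 3) (p : ℝ) (hp1 : 1 < p) (hp2 : p < 4 / (i:ℝ)) :
    ∃ C > (0:ℝ), ∀ w : EuclideanSpace ℝ (Fin 4) → ℝ,
      (∀ y, 0 ≤ w y) → IntegrableOn w Ω →
      ∫⁻ x in Ω, (∫⁻ y in Ω, (edist x y) ^ (-(i:ℝ)) * ENNReal.ofReal (w y)) ^ p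
        ≤ ENNReal.ofReal C * (∫⁻ y in Ω, ENNReal.ofReal (w y)) ^ p := by
  have hi0 : (0:ℝ) < i := by
    rcases hi with h | h | h <;> simp [h]
  have hp0 : 0 < p := by linarith
  have ha : (i:ℝ) * p < 4 := by
    rw [lt_div_iff₀ hi0] at hp2
    linarith
  set M := ∫⁻ x in Metric.closedBall (0 : EuclideanSpace ℝ (Fin 4)) (Metric.diam Ω),
    (edist x 0) ^ (-((i:ℝ) * p)) with hM
  have hMtop : M ≠ ⊤ := riesz_aux_kernel _ (by positivity) ha _
  have hker : ∀ y ∈ Ω, ∫⁻ x in Ω, ((edist x y) ^ (-(i:ℝ))) ^ p ≤ M := by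
    intro y hy
    have e := lintegral_add_right_eq_self (μ := volume)
      (fun x => (Metric.closedBall (0 : EuclideanSpace ℝ (Fin 4)) (Metric.diam Ω)).indicator
        (fun x => (edist x 0) ^ (-((i:ℝ) * p))) x) (-y)
    rw [hM, ← lintegral_indicator measurableSet_closedBall, ← e, ← lintegral_indicator hmeas]
    refine lintegral_mono fun x => ?_
    by_cases hx : x ∈ Ω
    · have hb : x + -y ∈ Metric.closedBall (0 : EuclideanSpace ℝ (Fin 4)) (Metric.diam Ω) := by
        rw [Metric.mem_closedBall, dist_zero_right, ← sub_eq_add_neg, ← dist_eq_norm]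
        exact Metric.dist_le_diam_of_mem hbdd hx hy
      simp only [Set.indicator_of_mem hx, Set.indicator_of_mem hb]
      rw [← ENNReal.rpow_mul, neg_mul, edist_dist, edist_dist, dist_zero_right, dist_eq_norm,
        sub_eq_add_neg]
    · simp [Set.indicator_of_notMem hx]
  refine ⟨M.toReal + 1, by positivity, fun w hw hwi => ?_⟩
  have hwm : AEMeasurable (fun y => ENNReal.ofReal (w y)) (volume.restrict Ω) :=
    hwi.aestronglyMeasurable.aemeasurable.ennreal_ofReal
  set ν := (volume.restrict Ω).withDensity (fun y => ENNReal.ofReal (w y)) with hν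
  have hνu : ν Set.univ = ∫⁻ y in Ω, ENNReal.ofReal (w y) := by
    rw [hν, withDensity_apply _ MeasurableSet.univ, Measure.restrict_univ]
  have hin : ∀ x, ∫⁻ y in Ω, (edist x y) ^ (-(i:ℝ)) * ENNReal.ofReal (w y)
      = ∫⁻ y, (edist x y) ^ (-(i:ℝ)) ∂ν := by
    intro x
    rw [hν, lintegral_withDensity_eq_lintegral_mul₀ hwm
      (by fun_prop : Measurable fun y => (edist x y) ^ (-(i:ℝ))).aemeasurable]
    exact lintegral_congr fun y => mul_comm _ _
  simp only [hin]
  rw [← hνu]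
  have hjm : Measurable (Function.uncurry fun x y : EuclideanSpace ℝ (Fin 4) =>
      ((edist x y) ^ (-(i:ℝ))) ^ p) := by
    unfold Function.uncurry
    fun_prop
  have hae : ∀ᵐ y ∂ν, y ∈ Ω :=
    (withDensity_absolutelyContinuous _ _).ae_le (ae_restrict_mem hmeas)
  calc ∫⁻ x in Ω, (∫⁻ y, (edist x y) ^ (-(i:ℝ)) ∂ν) ^ p
      ≤ ∫⁻ x in Ω, (∫⁻ y, ((edist x y) ^ (-(i:ℝ))) ^ p ∂ν) * (ν Set.univ) ^ (p - 1) :=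
        lintegral_mono fun x => riesz_aux_holder ν p hp1 _
          (by fun_prop : Measurable fun y => (edist x y) ^ (-(i:ℝ))).aemeasurable
    _ = (∫⁻ x in Ω, (∫⁻ y, ((edist x y) ^ (-(i:ℝ))) ^ p ∂ν)) * (ν Set.univ) ^ (p - 1) :=
        lintegral_mul_const _ hjm.lintegral_prod_right
    _ = (∫⁻ y, (∫⁻ x in Ω, ((edist x y) ^ (-(i:ℝ))) ^ p) ∂ν) * (ν Set.univ) ^ (p - 1) := by
        rw [lintegral_lintegral_swap hjm.aemeasurable]
    _ ≤ (∫⁻ _, M ∂ν) * (ν Set.univ) ^ (p - 1) := by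
        gcongr ?_ * _
        exact lintegral_mono_ae (hae.mono hker)
    _ = M * (ν Set.univ) ^ p := by
        rw [lintegral_const, mul_assoc]
        congr 1
        conv_lhs => rw [← ENNReal.rpow_one (ν Set.univ), ← ENNReal.rpow_mul, one_mul]
        rw [← ENNReal.rpow_add_of_nonneg _ _ zero_le_one (by linarith)]
        congr 1
        ring
    _ ≤ ENNReal.ofReal (M.toReal + 1) * (ν Set.univ) ^ p := by
        gcongr
        exact (ENNReal.le_ofReal_iff_toReal_le hMtop (by positivity)).2 (by linarith)
end

section
/- Let R > 0 and let p ∈ {1,2,3}. Then there exists a constant C > 0 (depending only on R and p) such that for all x, z in the closed ball B̄_R(0) ⊂ ℝ⁴ with x ≠ z, one has ∫_{B_R(0) ∖ B_{‖x−z‖/2}(z)} ‖x−y‖^{−p}·‖y−z‖^{−4} dy ≤ C·‖x−z‖^{−p}. -/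
open MeasureTheory Metric

abbrev KE4 := EuclideanSpace ℝ (Fin 4)

/-- Local singular part. -/
noncomputable def kernelG1 (p : ℕ) (u : KE4) : ℝ :=
  (ball (0 : KE4) (1/2)).indicator (fun u => 16 * (‖u‖ ^ p)⁻¹) u

/-- Tail part. -/
noncomputable def kernelG2 (p : ℕ) (u : KE4) : ℝ :=
  3 ^ p * 3 ^ (p + 4) * (1 + ‖u‖) ^ (-((p + 4 : ℕ) : ℝ))

lemma kernelG1_integrable (p : ℕ) (hp : p = 1 ∨ p = 2 ∨ p = 3) :
    Integrable (kernelG1 p) := by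
  have h : IntegrableOn (fun u : KE4 => (fun t : ℝ => 16 * (t ^ p)⁻¹) ‖u‖)
      (ball (0 : KE4) (1/2)) := by
    rw [integrableOn_fun_norm_addHaar volume (f := fun t : ℝ => 16 * (t ^ p)⁻¹)]
    have hc : IntegrableOn (fun t : ℝ => 16 * t ^ (3 - p)) (Set.Ioo 0 (1/2)) := by
      apply IntegrableOn.mono_set (t := Set.Icc 0 (1/2)) _ Set.Ioo_subset_Icc_self
      exact Continuous.integrableOn_Icc (by fun_prop)
    refine hc.congr_fun ?_ measurableSet_Ioo
    intro t ht
    have ht0 : t ≠ 0 := ht.1.ne'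
    simp only [finrank_euclideanSpace, Fintype.card_fin, smul_eq_mul]
    rcases hp with rfl | rfl | rfl <;> field_simp <;> norm_num <;> field_simp
  exact (integrable_indicator_iff measurableSet_ball).2 h

lemma kernelG2_integrable (p : ℕ) (hp : 1 ≤ p) : Integrable (kernelG2 p) := by
  unfold kernelG2
  apply Integrable.const_mul
  apply integrable_one_add_norm
  rw [finrank_euclideanSpace, Fintype.card_fin]
  exact_mod_cast (by omega : 4 < p + 4)

lemma kernel_scale (g : KE4 → ENNReal) (hg : AEMeasurable g) (x : KE4) (d : ℝ) (hd : 0 < d) :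
    ∫⁻ y, g (d⁻¹ • (y - x)) = ENNReal.ofReal (d ^ 4) * ∫⁻ y, g y := by
  have h1 : ∫⁻ y, g (d⁻¹ • (y - x)) = ∫⁻ y, g (d⁻¹ • y) :=
    lintegral_sub_right_eq_self (fun y => g (d⁻¹ • y)) x
  rw [h1]
  have hd' : d⁻¹ ≠ 0 := inv_ne_zero hd.ne'
  have hm := Measure.map_addHaar_smul (volume : Measure KE4) hd'
  have h2 : ∫⁻ y, g y ∂(Measure.map (fun y : KE4 => d⁻¹ • y) volume) = ∫⁻ y, g (d⁻¹ • y) := by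
    apply lintegral_map'
    · rw [hm]; exact hg.smul_measure _
    · fun_prop
  rw [← h2, hm, lintegral_smul_measure, finrank_euclideanSpace, Fintype.card_fin, smul_eq_mul]
  congr 2
  rw [abs_of_pos (by positivity)]
  simp

lemma kernel_pointwise (p : ℕ) (x y z : KE4) (hxz : x ≠ z) (hxy : y ≠ x)
    (hy : ‖x - z‖ / 2 ≤ ‖y - z‖) :
    (‖x - y‖ ^ p)⁻¹ * (‖y - z‖ ^ 4)⁻¹ ≤ (‖x - z‖ ^ (p + 4))⁻¹ *
      (kernelG1 p (‖x - z‖⁻¹ • (y - x)) + kernelG2 p (‖x - z‖⁻¹ • (y - z))) := by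
  have hd : 0 < ‖x - z‖ := norm_pos_iff.2 (sub_ne_zero.2 hxz)
  have ha : 0 < ‖x - y‖ := norm_pos_iff.2 (sub_ne_zero.2 hxy.symm)
  have htri : ‖y - z‖ ≤ ‖x - y‖ + ‖x - z‖ := by
    have := norm_sub_le (x - z) (x - y)
    rw [show (x - z) - (x - y) = y - z by abel] at this
    linarith
  have e1 : ‖‖x - z‖⁻¹ • (y - x)‖ = ‖x - y‖ / ‖x - z‖ := by
    rw [norm_smul, norm_inv, norm_norm, norm_sub_rev y x]; field_simp
  have e2 : ‖‖x - z‖⁻¹ • (y - z)‖ = ‖y - z‖ / ‖x - z‖ := by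
    rw [norm_smul, norm_inv, norm_norm]; field_simp
  unfold kernelG1 kernelG2
  rw [e2, Real.rpow_neg (by positivity), Real.rpow_natCast]
  simp only [Set.indicator, mem_ball_zero_iff, e1]
  generalize ‖x - z‖ = d at *
  generalize ‖x - y‖ = a at *
  generalize ‖y - z‖ = b at *
  have hb : 0 < b := by linarith
  split_ifs with h
  · have hk : (b ^ 4)⁻¹ ≤ 16 * (d ^ 4)⁻¹ := by
      calc (b ^ 4)⁻¹ ≤ ((d / 2) ^ 4)⁻¹ := by gcongr
        _ = 16 * (d ^ 4)⁻¹ := by field_simp; norm_num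
    calc (a ^ p)⁻¹ * (b ^ 4)⁻¹ ≤ (a ^ p)⁻¹ * (16 * (d ^ 4)⁻¹) := by gcongr
      _ = (d ^ (p + 4))⁻¹ * (16 * ((a / d) ^ p)⁻¹) := by
        rw [div_pow, pow_add]; field_simp
      _ ≤ _ := by
        gcongr
        have : 0 ≤ (3:ℝ) ^ p * 3 ^ (p + 4) * ((1 + b / d) ^ (p + 4))⁻¹ := by positivity
        linarith
  · have h' : d / 2 ≤ a := by
      rw [not_lt, le_div_iff₀ hd] at h; linarith
    have hab : b / 3 ≤ a := by linarith
    have hbd : 1 + b / d ≤ 3 * (b / d) := by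
      have : 1 / 2 ≤ b / d := by rw [le_div_iff₀ hd]; linarith
      linarith
    rw [zero_add]
    calc (a ^ p)⁻¹ * (b ^ 4)⁻¹ ≤ ((b / 3) ^ p)⁻¹ * (b ^ 4)⁻¹ := by gcongr
      _ = (d ^ (p + 4))⁻¹ * (3 ^ p * 3 ^ (p + 4) * ((3 * (b / d)) ^ (p + 4))⁻¹) := by
        rw [mul_pow, div_pow, div_pow, pow_add b]; field_simp
      _ ≤ _ := by gcongr

/-- Convolution-type kernel estimate: for `R > 0` and `p ∈ {1,2,3}` there is `C > 0` such
that for all distinct `x, z` in the closed ball of radius `R` of `ℝ⁴`,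
`∫_{B_R(0) ∖ B_{‖x−z‖/2}(z)} ‖x−y‖^{−p} ‖y−z‖^{−4} dy ≤ C ‖x−z‖^{−p}`. -/
theorem kernel_estimate (R : ℝ) (hR : 0 < R) (p : ℕ) (hp : p = 1 ∨ p = 2 ∨ p = 3) :
    ∃ C > (0:ℝ), ∀ x ∈ closedBall (0 : EuclideanSpace ℝ (Fin 4)) R,
      ∀ z ∈ closedBall (0 : EuclideanSpace ℝ (Fin 4)) R, x ≠ z →
        ∫⁻ y in (ball (0 : EuclideanSpace ℝ (Fin 4)) R \ ball z (‖x - z‖ / 2)),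
            (edist x y) ^ (-(p:ℝ)) * (edist y z) ^ (-(4:ℝ))
          ≤ ENNReal.ofReal (C * ‖x - z‖ ^ (-(p:ℝ))) := by
  have i1 := kernelG1_integrable p hp
  have i2 := kernelG2_integrable p (by omega)
  have m1 := i1.aestronglyMeasurable.aemeasurable.ennreal_ofReal
  have m2 := i2.aestronglyMeasurable.aemeasurable.ennreal_ofReal
  have f1 : ∫⁻ u, ENNReal.ofReal (kernelG1 p u) ≠ ⊤ := i1.lintegral_lt_top.ne
  have f2 : ∫⁻ u, ENNReal.ofReal (kernelG2 p u) ≠ ⊤ := i2.lintegral_lt_top.ne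
  set I := (∫⁻ u, ENNReal.ofReal (kernelG1 p u)) + ∫⁻ u, ENNReal.ofReal (kernelG2 p u) with hI
  have hIt : I ≠ ⊤ := ENNReal.add_ne_top.2 ⟨f1, f2⟩
  refine ⟨I.toReal + 1, by positivity, ?_⟩
  intro x _ z _ hxz
  have hd : 0 < ‖x - z‖ := norm_pos_iff.2 (sub_ne_zero.2 hxz)
  have s1 := kernel_scale _ m1 x _ hd
  have s2 := kernel_scale _ m2 z _ hd
  have n1 : ∀ u, 0 ≤ kernelG1 p u := fun u => by
    unfold kernelG1; exact Set.indicator_nonneg (fun _ _ => by positivity) _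
  have n2 : ∀ u, 0 ≤ kernelG2 p u := fun u => by unfold kernelG2; positivity
  have hms : MeasurableSet (ball (0 : KE4) R \ ball z (‖x - z‖ / 2)) :=
    measurableSet_ball.diff measurableSet_ball
  have am2 : AEMeasurable
      (fun y => ENNReal.ofReal (kernelG2 p (‖x - z‖⁻¹ • (y - z)))) := by
    unfold kernelG2; fun_prop
  calc _ ≤ ∫⁻ y in (ball (0 : KE4) R \ ball z (‖x - z‖ / 2)),
        ENNReal.ofReal ((‖x - z‖ ^ (p + 4))⁻¹) *
        (ENNReal.ofReal (kernelG1 p (‖x - z‖⁻¹ • (y - x))) +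
          ENNReal.ofReal (kernelG2 p (‖x - z‖⁻¹ • (y - z)))) := by
        apply lintegral_mono_ae
        have hne : ∀ᵐ y ∂(volume.restrict (ball (0 : KE4) R \ ball z (‖x - z‖ / 2))), y ≠ x :=
          ae_restrict_of_ae (Measure.ae_ne volume x)
        filter_upwards [hne, ae_restrict_mem hms] with y hyx hy
        have hy2 : ‖x - z‖ / 2 ≤ ‖y - z‖ := by
          have := hy.2
          rwa [mem_ball, not_lt, dist_eq_norm] at this
        have ha : 0 < ‖x - y‖ := norm_pos_iff.2 (sub_ne_zero.2 hyx.symm)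
        have hb : 0 < ‖y - z‖ := by linarith
        have hk := kernel_pointwise p x y z hxz hyx hy2
        rw [← ENNReal.ofReal_add (n1 _) (n2 _), ← ENNReal.ofReal_mul (by positivity)]
        refine le_trans (le_of_eq ?_) (ENNReal.ofReal_le_ofReal hk)
        rw [edist_dist, edist_dist, dist_eq_norm, dist_eq_norm,
          ENNReal.ofReal_rpow_of_pos ha, ENNReal.ofReal_rpow_of_pos hb,
          ← ENNReal.ofReal_mul (by positivity), Real.rpow_neg ha.le, Real.rpow_neg hb.le,
          Real.rpow_natCast]
        norm_cast
    _ ≤ ∫⁻ y, ENNReal.ofReal ((‖x - z‖ ^ (p + 4))⁻¹) *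
        (ENNReal.ofReal (kernelG1 p (‖x - z‖⁻¹ • (y - x))) +
          ENNReal.ofReal (kernelG2 p (‖x - z‖⁻¹ • (y - z)))) := setLIntegral_le_lintegral _ _
    _ = ENNReal.ofReal ((‖x - z‖ ^ (p + 4))⁻¹) * (ENNReal.ofReal (‖x - z‖ ^ 4) * I) := by
        rw [lintegral_const_mul' _ _ ENNReal.ofReal_ne_top, lintegral_add_right' _ am2, s1, s2,
          ← mul_add]
    _ = ENNReal.ofReal (I.toReal * ‖x - z‖ ^ (-(p:ℝ))) := by
        rw [← ENNReal.ofReal_toReal hIt, ENNReal.toReal_ofReal ENNReal.toReal_nonneg,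
          ← ENNReal.ofReal_mul (by positivity), ← ENNReal.ofReal_mul (by positivity),
          Real.rpow_neg hd.le, Real.rpow_natCast]
        congr 1
        rw [pow_add]; field_simp
    _ ≤ _ := by
        apply ENNReal.ofReal_le_ofReal
        gcongr
        linarith
end
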